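/- arXiv:1710.00675 — 4 statements merged into one kernel-verified Lean document; each statement's English description precedes it below -/
import Mathlib

section
/- Let S be a finite nonempty type, p : S → PMF S a transition function, and for each state s let μ_{p,s} denote the Markov-chain trajectory measure on ℕ → S started at s (obtained by Ionescu–Tulcea from the kernel induced by p). Let q : S → PMF S be another transition function such that for every state s the support of q s equals the support of p s. Then for every start state s and every target set T ⊆ S, the measure μ_{p,s} assigns probability 1 to the event Reach(T) = {ω : ℕ → S | ∃ n, ω n ∈ T} if and only if μ_{q,s} assigns probability 1 to Reach(T). (This is the Markov-chain core of Lemma 1: almost-sure reachability depends only on the supports of the transition distributions.) -/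
open MeasureTheory
open scoped Classical

/-- `IsMarkovTraj p s μ` says that `μ` is the trajectory measure on `ℕ → S` of the
Markov chain with one-step transition function `p` started at `s` (as obtained by the
Ionescu–Tulcea construction from the kernel induced by `p`): it is the unique probability
measure whose cylinder probabilities are the Markov-chain ones. -/
def IsMarkovTraj {S : Type*} [MeasurableSpace S] (p : S → PMF S) (s : S)
    (μ : Measure (ℕ → S)) : Prop :=
  IsProbabilityMeasure μ ∧
    ∀ (n : ℕ) (w : Fin (n + 1) → S),
      μ {ω | ∀ i : Fin (n + 1), ω i = w i} =
        if w 0 = s then ∏ i : Fin n, p (w i.castSucc) (w i.succ) else 0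

open scoped ENNReal

/-- Equality in the maximum principle: if `f` is bounded on the support of `P` by its
`P`-average, then it is constant there. -/
lemma PMF.eq_of_sum_mul_eq_of_le {S : Type*} [Fintype S] (P : PMF S) {f : S → ℝ≥0∞}
    {m : ℝ≥0∞} (hm : m ≠ ∞) (hle : ∀ t ∈ P.support, f t ≤ m) (hsum : ∑ t, P t * f t = m) {t : S}
    (ht : t ∈ P.support) : f t = m := by
  have hdecomp : ∑ t, P t * (m - f t) + m = 0 + m := by
    nth_rewrite 2 [← hsum]
    rw [← Finset.sum_add_distrib, zero_add]
    calc ∑ t, (P t * (m - f t) + P t * f t) = ∑ t, P t * m := by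
          refine Finset.sum_congr rfl fun u _ ↦ ?_
          by_cases hu : u ∈ P.support
          · rw [← mul_add, tsub_add_cancel_of_le (hle u hu)]
          · simp [(PMF.apply_eq_zero_iff _ _).2 hu]
      _ = m := by rw [← Finset.sum_mul, ← tsum_fintype (L := .unconditional S), P.tsum_coe, one_mul]
  have hzero := (ENNReal.add_left_inj hm).1 hdecomp
  have hterm := (Finset.sum_eq_zero_iff.1 hzero) t (Finset.mem_univ t)
  rcases mul_eq_zero.1 hterm with h0 | h0
  · exact absurd h0 ((PMF.mem_support_iff _ _).1 ht)
  · exact le_antisymm (hle t ht) (tsub_eq_zero_iff_le.1 h0)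

namespace IsMarkovTraj

lemma measure_reach_eq_one_iff {S : Type*} [MeasurableSpace S] [DiscreteMeasurableSpace S]
    {p : S → PMF S} {s : S} {ν : Measure (ℕ → S)} (h : IsMarkovTraj p s ν) (T : Set S) :
    ν {ω | ∃ n, ω n ∈ T} = 1 ↔ ν {ω | ∀ n, ω n ∉ T} = 0 := by
  have := h.1
  have hmeas : MeasurableSet {ω : ℕ → S | ∃ n, ω n ∈ T} := by
    rw [Set.ofPred_exists]
    exact MeasurableSet.iUnion fun n ↦
      measurable_pi_apply n (MeasurableSet.of_discrete (s := T))
  rw [← prob_compl_eq_zero_iff hmeas]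
  simp [Set.compl_ofPred]

lemma tendsto_measure_avoid_upTo {S : Type*} [MeasurableSpace S] [DiscreteMeasurableSpace S]
    {p : S → PMF S} {μ : S → Measure (ℕ → S)} (h : ∀ s, IsMarkovTraj p s (μ s)) (T : Set S)
    (s : S) :
    Filter.Tendsto (fun n : ℕ ↦ μ s {ω | ∀ i : Fin (n + 1), ω i ∉ T}) Filter.atTop
      (nhds (μ s {ω | ∀ n, ω n ∉ T})) := by
  have := (h s).1
  have hinter : {ω : ℕ → S | ∀ n, ω n ∉ T} =
      ⋂ n : ℕ, {ω : ℕ → S | ∀ i : Fin (n + 1), ω i ∉ T} := by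
    ext ω
    simp only [Set.mem_ofPred_eq, Set.mem_iInter]
    exact ⟨fun hω n i ↦ hω i, fun hω n ↦ hω n (Fin.last n)⟩
  rw [hinter]
  refine tendsto_measure_iInter_atTop (fun n ↦ ?_) ?_ ⟨0, measure_ne_top _ _⟩
  · rw [Set.ofPred_forall]
    refine (MeasurableSet.iInter fun i ↦ ?_).nullMeasurableSet
    have hmeas : Measurable fun ω : ℕ → S ↦ ω i := measurable_pi_apply _
    exact hmeas (MeasurableSet.of_discrete (s := Tᶜ))
  · intro m n hmn ω hω i
    exact hω ⟨i, by omega⟩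

variable {S : Type*} [Fintype S] [MeasurableSpace S] [DiscreteMeasurableSpace S]
  {p : S → PMF S}

/-- The probability of avoiding `T` up to time `n`, as a sum over finite paths. -/
lemma measure_avoid_upTo_eq_sum {s : S} {μ : Measure (ℕ → S)} (h : IsMarkovTraj p s μ)
    (T : Set S) (n : ℕ) :
    μ {ω | ∀ i : Fin (n + 1), ω i ∉ T} =
      ∑ w : Fin (n + 1) → S, if ∀ i, w i ∉ T then
        (if w 0 = s then ∏ i : Fin n, p (w i.castSucc) (w i.succ) else 0) else 0 := by
  have hunion : {ω : ℕ → S | ∀ i : Fin (n + 1), ω i ∉ T} =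
      ⋃ w ∈ Finset.univ.filter (fun w : Fin (n + 1) → S ↦ ∀ i, w i ∉ T),
        {ω : ℕ → S | ∀ i : Fin (n + 1), ω i = w i} := by
    ext ω
    simp only [Set.mem_ofPred_eq, Finset.mem_filter, Finset.mem_univ, true_and, Set.mem_iUnion,
      exists_prop]
    constructor
    · intro hω
      exact ⟨fun i ↦ ω i, hω, fun _ ↦ rfl⟩
    · rintro ⟨w, hw, hωw⟩ i
      rw [hωw i]
      exact hw i
  rw [hunion, measure_biUnion_finset, Finset.sum_filter]
  · exact Finset.sum_congr rfl fun w _ ↦ by rw [h.2 n w]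
  · intro w _ w' _ hne
    refine Set.disjoint_left.2 fun ω hω hω' ↦ hne (funext fun i ↦ ?_)
    rw [← hω i, hω' i]
  · intro w _
    rw [Set.ofPred_forall]
    refine MeasurableSet.iInter fun i ↦ ?_
    have hmeas : Measurable fun ω : ℕ → S ↦ ω i := measurable_pi_apply _
    exact hmeas (MeasurableSet.of_discrete (s := {w i}))

variable {μ : S → Measure (ℕ → S)}

lemma measure_avoid_upTo_zero (h : ∀ s, IsMarkovTraj p s (μ s)) (T : Set S) (s : S) :
    μ s {ω | ∀ i : Fin (0 + 1), ω i ∉ T} = if s ∈ T then 0 else 1 := by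
  rw [(h s).measure_avoid_upTo_eq_sum, ← (Equiv.funUnique (Fin 1) S).symm.sum_comp]
  rw [Finset.sum_eq_single s]
  · by_cases hs : s ∈ T <;> simp [hs]
  · intro t _ hts
    simp [hts]
  · simp

lemma measure_avoid_upTo_succ (h : ∀ s, IsMarkovTraj p s (μ s)) (T : Set S) (n : ℕ) (s : S) :
    μ s {ω | ∀ i : Fin (n + 1 + 1), ω i ∉ T} =
      if s ∈ T then 0 else ∑ t, p s t * μ t {ω | ∀ i : Fin (n + 1), ω i ∉ T} := by
  simp_rw [fun t ↦ (h t).measure_avoid_upTo_eq_sum T]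
  rw [← (Fin.consEquiv fun _ : Fin (n + 1 + 1) ↦ S).sum_comp, Fintype.sum_prod_type,
    Finset.sum_eq_single s]
  · by_cases hs : s ∈ T
    · simp [Fin.consEquiv, Fin.forall_fin_succ, hs]
    · simp_rw [if_neg hs, Finset.mul_sum]
      rw [Finset.sum_comm]
      refine Finset.sum_congr rfl fun w _ ↦ ?_
      rw [Finset.sum_eq_single (w 0)]
      · simp only [Fin.consEquiv, Equiv.coe_fn_mk, Fin.forall_fin_succ (n := n + 1),
          Fin.cons_zero, Fin.cons_succ, hs, not_false_eq_true, true_and, if_true,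
          Fin.prod_univ_succ (n := n), Fin.castSucc_zero, ← Fin.succ_castSucc, mul_ite, mul_zero]
      · intro t _ ht
        simp [ht.symm]
      · simp
  · intro t _ hts
    simp [Fin.consEquiv, hts]
  · simp

/-- The probability of never reaching `T` is harmonic outside `T` and vanishes on `T`. -/
lemma measure_avoid_eq (h : ∀ s, IsMarkovTraj p s (μ s)) (T : Set S) (s : S) :
    μ s {ω | ∀ n, ω n ∉ T} =
      if s ∈ T then 0 else ∑ t, p s t * μ t {ω | ∀ n, ω n ∉ T} := by
  refine tendsto_nhds_unique
    ((Filter.tendsto_add_atTop_iff_nat 1).2 (tendsto_measure_avoid_upTo h T s)) ?_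
  simp_rw [measure_avoid_upTo_succ h]
  split_ifs
  · exact tendsto_const_nhds
  · exact tendsto_finsetSum _ fun t _ ↦
      ENNReal.Tendsto.const_mul (tendsto_measure_avoid_upTo h T t)
        (Or.inr ((p s).apply_ne_top t))

/-- A chain started in a closed set of states disjoint from `T` never reaches `T`. -/
lemma measure_avoid_eq_one_of_closed (h : ∀ s, IsMarkovTraj p s (μ s)) {T B : Set S}
    (hdisj : Disjoint B T) (hclosed : ∀ s ∈ B, (p s).support ⊆ B) {s : S} (hs : s ∈ B) :
    μ s {ω | ∀ n, ω n ∉ T} = 1 := by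
  have hfin : ∀ n : ℕ, ∀ t ∈ B, μ t {ω | ∀ i : Fin (n + 1), ω i ∉ T} = 1 := by
    intro n
    induction n with
    | zero =>
      intro t ht
      rw [measure_avoid_upTo_zero h, if_neg (Set.disjoint_left.1 hdisj ht)]
    | succ n ih =>
      intro t ht
      rw [measure_avoid_upTo_succ h, if_neg (Set.disjoint_left.1 hdisj ht),
        ← (p t).tsum_coe, tsum_fintype]
      refine Finset.sum_congr rfl fun u _ ↦ ?_
      by_cases hu : u ∈ (p t).support
      · rw [ih u (hclosed t ht hu), mul_one]
      · rw [(PMF.apply_eq_zero_iff _ _).2 hu, zero_mul]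
  refine tendsto_nhds_unique (tendsto_measure_avoid_upTo h T s) ?_
  simp_rw [fun n ↦ hfin n s hs]
  exact tendsto_const_nhds

lemma measure_avoid_eq_zero_of_support_eq {q : S → PMF S} {ν : S → Measure (ℕ → S)}
    (hsupp : ∀ s, (q s).support = (p s).support)
    (hμ : ∀ s, IsMarkovTraj p s (μ s)) (hν : ∀ s, IsMarkovTraj q s (ν s)) (T : Set S) {s : S}
    (hs : ν s {ω | ∀ n, ω n ∉ T} = 0) : μ s {ω | ∀ n, ω n ∉ T} = 0 := by
  set f : S → ℝ≥0∞ := fun t ↦ μ t {ω | ∀ n, ω n ∉ T} with hf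
  set A : Set S := {t | ν t {ω | ∀ n, ω n ∉ T} = 0}
  have hAclosed : ∀ t ∈ A, t ∉ T → (p t).support ⊆ A := by
    intro t ht htT u hu
    have hsum := measure_avoid_eq hν T t
    rw [if_neg htT, show ν t {ω | ∀ n, ω n ∉ T} = 0 from ht] at hsum
    have hterm := Finset.sum_eq_zero_iff.1 hsum.symm u (Finset.mem_univ u)
    rw [← hsupp] at hu
    exact (mul_eq_zero.1 hterm).resolve_left ((PMF.mem_support_iff _ _).1 hu)
  obtain ⟨t, htA, hmax⟩ := (Set.toFinite A).exists_maximalFor f A ⟨s, hs⟩ |>.imp fun t ht ↦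
    (⟨ht.1, fun u hu ↦ (le_total (f u) (f t)).elim id (ht.2 hu)⟩ :
      t ∈ A ∧ ∀ u ∈ A, f u ≤ f t)
  by_contra hpos
  have htpos : f t ≠ 0 := fun h0 ↦ hpos (le_antisymm (h0 ▸ hmax s hs) zero_le)
  have hnotMem : ∀ u, f u = f t → u ∉ T := by
    intro u hu huT
    apply htpos
    rw [← hu, hf]
    simp only
    rw [measure_avoid_eq hμ, if_pos huT]
  have hone : ν t {ω | ∀ n, ω n ∉ T} = 1 := by
    refine measure_avoid_eq_one_of_closed hν (B := {u | u ∈ A ∧ f u = f t})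
      (Set.disjoint_left.2 fun u hu ↦ hnotMem u hu.2) ?_ ⟨htA, rfl⟩
    rintro u ⟨huA, hu⟩ v hv
    rw [hsupp] at hv
    have hsub := hAclosed u huA (hnotMem u hu)
    refine ⟨hsub hv, (p u).eq_of_sum_mul_eq_of_le ?_ (fun x hx ↦ hmax x (hsub hx)) ?_ hv⟩
    · have := (hμ t).1
      exact measure_ne_top _ _
    · rw [← hu, hf]
      simp only
      rw [measure_avoid_eq hμ T u, if_neg (hnotMem u hu)]
  exact one_ne_zero (hone.symm.trans htA)

end IsMarkovTraj

/-- Almost-sure reachability in a finite-state Markov chain depends only on the supports of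
the transition distributions. -/
theorem markov_reach_ae_iff_of_support_eq
    {S : Type*} [Fintype S] [Nonempty S] [MeasurableSpace S] [DiscreteMeasurableSpace S]
    (p q : S → PMF S) (hsupp : ∀ s, (q s).support = (p s).support)
    (μp μq : S → Measure (ℕ → S))
    (hμp : ∀ s, IsMarkovTraj p s (μp s)) (hμq : ∀ s, IsMarkovTraj q s (μq s))
    (s : S) (T : Set S) :
    μp s {ω | ∃ n, ω n ∈ T} = 1 ↔ μq s {ω | ∃ n, ω n ∈ T} = 1 := by
  rw [(hμp s).measure_reach_eq_one_iff, (hμq s).measure_reach_eq_one_iff]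
  exact ⟨IsMarkovTraj.measure_avoid_eq_zero_of_support_eq (fun t ↦ (hsupp t).symm) hμq hμp T,
    IsMarkovTraj.measure_avoid_eq_zero_of_support_eq hsupp hμp hμq T⟩
end

section
/- Let S be a finite nonempty type, p : S → PMF S a transition function, and for each state s let μ_{p,s} denote the Markov-chain trajectory measure on ℕ → S started at s. Define u : S → PMF S by letting u s be the uniform distribution on the (nonempty, finite) support of p s. Then for every start state s and target set T ⊆ S, μ_{p,s}(Reach(T)) = 1 if and only if μ_{u,s}(Reach(T)) = 1. (Instance of Lemma 1: replacing every transition distribution by the uniform distribution over its support preserves almost-sure reachability.) -/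
open MeasureTheory
open scoped Classical

/-- The transition function obtained from `p` by replacing each transition distribution by
the uniform distribution over its support. -/
noncomputable def uniformizeSupport {S : Type*} [Fintype S] (p : S → PMF S) : S → PMF S :=
  fun s => PMF.uniformOfFinset (p s).support.toFinset
    (Set.toFinset_nonempty.mpr (p s).support_nonempty)

open Filter Topology

/-- The probability that a chain with transition matrix `P` started at `s` avoids `T` up to
time `n`. -/
noncomputable def avoidProb {S : Type*} [Fintype S] (P : S → S → ℝ) (T : Set S) : ℕ → S → ℝ
  | 0, s => if s ∈ T then 0 else 1
  | n + 1, s => if s ∈ T then 0 else ∑ t, P s t * avoidProb P T n t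

section avoidProb

variable {S : Type*} [Fintype S] {P Q : S → S → ℝ} {T : Set S}

lemma avoidProb_of_mem {s : S} (hs : s ∈ T) (n : ℕ) : avoidProb P T n s = 0 := by
  cases n <;> simp [avoidProb, hs]

lemma avoidProb_eq_one_of_closed (hP1 : ∀ s, ∑ t, P s t = 1) {A : Set S}
    (hAT : ∀ x ∈ A, x ∉ T) (hA : ∀ x ∈ A, ∀ y, P x y ≠ 0 → y ∈ A) (n : ℕ) :
    ∀ x ∈ A, avoidProb P T n x = 1 := by
  induction n with
  | zero => intro x hx; simp [avoidProb, hAT x hx]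
  | succ n ih =>
    intro x hx
    rw [avoidProb, if_neg (hAT x hx), ← hP1 x]
    refine Finset.sum_congr rfl fun y _ => ?_
    by_cases hy : P x y = 0
    · simp [hy]
    · rw [ih y (hA x hx y hy), mul_one]

lemma avoidProb_eq_sum_paths (n : ℕ) (s : S) :
    avoidProb P T n s = ∑ w : Fin (n + 1) → S,
      if ∀ i, w i ∉ T then
        if w 0 = s then ∏ i : Fin n, P (w i.castSucc) (w i.succ) else 0
      else 0 := by
  induction n generalizing s with
  | zero =>
    rw [← (Equiv.funUnique (Fin 1) S).symm.sum_comp, Finset.sum_eq_single s]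
    · simp [avoidProb, ite_not]
    · intro t _ hts
      simp [hts]
    · simp
  | succ n ih =>
    rw [← (Fin.consEquiv fun _ => S).sum_comp, Fintype.sum_prod_type, Finset.sum_eq_single s]
    · by_cases hs : s ∈ T
      · simp [avoidProb, hs, Fin.forall_fin_succ (n := n + 1), Fin.consEquiv]
      · simp only [avoidProb, hs, if_false, ih, Finset.mul_sum]
        rw [Finset.sum_comm]
        refine Finset.sum_congr rfl fun w _ => ?_
        rw [Finset.sum_eq_single (w 0)]
        · simp [Fin.consEquiv, Fin.forall_fin_succ (n := n + 1), hs, Fin.prod_univ_succ]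
        · intro t _ ht
          simp [ht.symm]
        · simp
    · intro t _ hts
      simp [Fin.consEquiv, hts]
    · simp

lemma eq_sum_of_tendsto_avoidProb {h : S → ℝ}
    (hh : ∀ s, Tendsto (fun n => avoidProb P T n s) atTop (𝓝 (h s))) {s : S} (hs : s ∉ T) :
    h s = ∑ t, P s t * h t := by
  refine tendsto_nhds_unique ((tendsto_add_atTop_iff_nat 1).2 (hh s)) ?_
  simp only [avoidProb, hs, if_false]
  exact tendsto_finsetSum _ fun t _ => (hh t).const_mul _

/-- A maximum principle: vanishing of the limiting avoidance probability depends only on which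
transitions are possible. -/
lemma avoidProb_limit_eq_zero_of_support_eq (hP0 : ∀ s t, 0 ≤ P s t) (hP1 : ∀ s, ∑ t, P s t = 1)
    (hQ0 : ∀ s t, 0 ≤ Q s t) (hQ1 : ∀ s, ∑ t, Q s t = 1)
    (hPQ : ∀ s t, P s t = 0 ↔ Q s t = 0) {f g : S → ℝ} (hf0 : ∀ s, 0 ≤ f s) (hg0 : ∀ s, 0 ≤ g s)
    (hf : ∀ s, Tendsto (fun n => avoidProb P T n s) atTop (𝓝 (f s)))
    (hg : ∀ s, Tendsto (fun n => avoidProb Q T n s) atTop (𝓝 (g s)))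
    {s : S} (hs : f s = 0) : g s = 0 := by
  obtain ⟨x, hx, hmax⟩ := Finset.exists_max_image {t | f t = 0} g ⟨s, by simpa using hs⟩
  simp only [Finset.mem_filter, Finset.mem_univ, true_and] at hx hmax
  refine le_antisymm ?_ (hg0 s)
  by_contra! hpos
  have hM : 0 < g x := hpos.trans_le (hmax s hs)
  have hAT : ∀ y ∈ {y | f y = 0 ∧ g y = g x}, y ∉ T := by
    rintro y ⟨-, hy⟩ hyT
    have : g y = 0 := tendsto_nhds_unique (hg y) (by simp [avoidProb_of_mem hyT])
    linarith
  have hA : ∀ y ∈ {y | f y = 0 ∧ g y = g x}, ∀ z, P y z ≠ 0 → z ∈ {y | f y = 0 ∧ g y = g x} := by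
    intro y hy z hz
    have hyT := hAT y hy
    have hfsum := eq_sum_of_tendsto_avoidProb hf hyT
    rw [hy.1, eq_comm, Finset.sum_eq_zero_iff_of_nonneg
      fun t _ => mul_nonneg (hP0 y t) (hf0 t)] at hfsum
    have hfz : ∀ t, P y t ≠ 0 → f t = 0 := fun t ht =>
      (mul_eq_zero.1 (hfsum t (Finset.mem_univ t))).resolve_left ht
    have hgsum : ∑ t, Q y t * (g x - g t) = 0 := by
      simp only [mul_sub, Finset.sum_sub_distrib, ← Finset.sum_mul, hQ1,
        ← eq_sum_of_tendsto_avoidProb hg hyT, hy.2, one_mul, sub_self]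
    rw [Finset.sum_eq_zero_iff_of_nonneg] at hgsum
    · refine ⟨hfz z hz, ?_⟩
      have := (mul_eq_zero.1 (hgsum z (Finset.mem_univ z))).resolve_left (mt (hPQ y z).2 hz)
      linarith
    · intro t _
      by_cases ht : P y t = 0
      · simp [(hPQ y t).1 ht]
      · exact mul_nonneg (hQ0 y t) (sub_nonneg.2 (hmax t (hfz t ht)))
  have hone : f x = 1 := tendsto_nhds_unique (hf x) (by
    simp [fun n => avoidProb_eq_one_of_closed hP1 hAT hA n x ⟨hx, rfl⟩])
  linarith

end avoidProb

section IsMarkovTraj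

variable {S : Type*} [MeasurableSpace S] [DiscreteMeasurableSpace S]
  {p : S → PMF S} {s : S} {μ : Measure (ℕ → S)}

lemma IsMarkovTraj.real_avoid_le [Fintype S] (hμ : IsMarkovTraj p s μ) (T : Set S) (n : ℕ) :
    μ.real {ω | ∀ i ≤ n, ω i ∉ T} = avoidProb (fun x y => (p x y).toReal) T n s := by
  have := hμ.1
  have hset : {ω : ℕ → S | ∀ i ≤ n, ω i ∉ T} =
      ⋃ w ∈ Finset.univ.filter (fun w : Fin (n + 1) → S => ∀ i, w i ∉ T),
        {ω | ∀ i : Fin (n + 1), ω i = w i} := by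
    ext ω
    simp only [Set.mem_ofPred_eq, Finset.mem_filter, Finset.mem_univ, true_and, Set.mem_iUnion,
      exists_prop]
    constructor
    · intro h
      exact ⟨fun i => ω i, fun i => h i (Nat.le_of_lt_succ i.2), fun _ => rfl⟩
    · rintro ⟨w, hw, hω⟩ i hi
      have := hω ⟨i, Nat.lt_succ_of_le hi⟩
      simp only at this
      rw [this]
      exact hw _
  rw [hset, measureReal_biUnion_finset, avoidProb_eq_sum_paths, Finset.sum_filter]
  · refine Finset.sum_congr rfl fun w _ => ?_
    rw [measureReal_def, hμ.2 n w]
    split_ifs <;> simp [ENNReal.toReal_prod]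
  · intro w _ w' _ hne
    refine Set.disjoint_left.2 fun ω hω hω' => hne ?_
    funext i
    exact (hω i).symm.trans (hω' i)
  · intro w _
    simp only [Set.ofPred_forall]
    exact MeasurableSet.iInter fun i =>
      (MeasurableSet.of_discrete (s := {w i})).preimage (measurable_pi_apply (i : ℕ))

lemma IsMarkovTraj.tendsto_avoidProb [Fintype S] (hμ : IsMarkovTraj p s μ) (T : Set S) :
    Tendsto (fun n => avoidProb (fun x y => (p x y).toReal) T n s) atTop
      (𝓝 (μ.real {ω | ∀ n, ω n ∉ T})) := by
  have := hμ.1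
  have hset : {ω : ℕ → S | ∀ n, ω n ∉ T} = ⋂ n, {ω | ∀ i ≤ n, ω i ∉ T} := by
    ext ω
    simp only [Set.mem_ofPred_eq, Set.mem_iInter]
    exact ⟨fun h _ i _ => h i, fun h n => h n n le_rfl⟩
  simp only [← hμ.real_avoid_le, hset, measureReal_def]
  refine (ENNReal.tendsto_toReal (measure_ne_top _ _)).comp
    (tendsto_measure_iInter_atTop (fun n => ?_) ?_ ⟨0, measure_ne_top _ _⟩)
  · simp only [Set.ofPred_forall]
    exact (MeasurableSet.iInter fun i => MeasurableSet.iInter fun _ =>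
      measurable_pi_apply i (MeasurableSet.of_discrete (s := Tᶜ))).nullMeasurableSet
  · exact fun m n hmn ω hω i hi => hω i (hi.trans hmn)

lemma IsMarkovTraj.reach_eq_one_iff (hμ : IsMarkovTraj p s μ) (T : Set S) :
    μ {ω | ∃ n, ω n ∈ T} = 1 ↔ μ.real {ω | ∀ n, ω n ∉ T} = 0 := by
  have := hμ.1
  have hmeas : MeasurableSet {ω : ℕ → S | ∃ n, ω n ∈ T} := by
    simp only [Set.ofPred_exists]
    exact MeasurableSet.iUnion fun i => measurable_pi_apply i (MeasurableSet.of_discrete (s := T))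
  rw [← prob_compl_eq_zero_iff hmeas, measureReal_eq_zero_iff]
  simp [Set.compl_ofPred]

lemma IsMarkovTraj.reach_eq_one_of_support_eq [Fintype S] {q : S → PMF S}
    {μp μq : S → Measure (ℕ → S)}
    (hμp : ∀ s, IsMarkovTraj p s (μp s)) (hμq : ∀ s, IsMarkovTraj q s (μq s))
    (hpq : ∀ x, (p x).support = (q x).support) (s : S) (T : Set S)
    (h : μp s {ω | ∃ n, ω n ∈ T} = 1) : μq s {ω | ∃ n, ω n ∈ T} = 1 := by
  have hsum (r : PMF S) : ∑ t, (r t).toReal = 1 := by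
    rw [← ENNReal.toReal_sum fun t _ => r.apply_ne_top t, ← tsum_fintype (L := .unconditional _),
      r.tsum_coe, ENNReal.toReal_one]
  have hzero (x t : S) : (p x t).toReal = 0 ↔ (q x t).toReal = 0 := by
    simp only [ENNReal.toReal_eq_zero_iff, PMF.apply_ne_top, or_false, PMF.apply_eq_zero_iff, hpq]
  rw [(hμp s).reach_eq_one_iff] at h
  rw [(hμq s).reach_eq_one_iff]
  exact avoidProb_limit_eq_zero_of_support_eq (fun _ _ => ENNReal.toReal_nonneg)
    (fun x => hsum (p x)) (fun _ _ => ENNReal.toReal_nonneg) (fun x => hsum (q x)) hzero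
    (f := fun s => (μp s).real {ω | ∀ n, ω n ∉ T}) (g := fun s => (μq s).real {ω | ∀ n, ω n ∉ T})
    (fun _ => measureReal_nonneg) (fun _ => measureReal_nonneg)
    (fun s => (hμp s).tendsto_avoidProb T) (fun s => (hμq s).tendsto_avoidProb T) h

end IsMarkovTraj

lemma support_uniformizeSupport {S : Type*} [Fintype S] (p : S → PMF S) (x : S) :
    (uniformizeSupport p x).support = (p x).support := by
  simp [uniformizeSupport]

/-- Replacing every transition distribution of a finite-state Markov chain by the uniform
distribution over its support preserves almost-sure reachability. -/
theorem markov_reach_ae_iff_uniformize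
    {S : Type*} [Fintype S] [Nonempty S] [MeasurableSpace S] [DiscreteMeasurableSpace S]
    (p : S → PMF S)
    (μp μu : S → Measure (ℕ → S))
    (hμp : ∀ s, IsMarkovTraj p s (μp s))
    (hμu : ∀ s, IsMarkovTraj (uniformizeSupport p) s (μu s))
    (s : S) (T : Set S) :
    μp s {ω | ∃ n, ω n ∈ T} = 1 ↔ μu s {ω | ∃ n, ω n ∈ T} = 1 := by
  exact ⟨IsMarkovTraj.reach_eq_one_of_support_eq hμp hμu
      (fun x => (support_uniformizeSupport p x).symm) s T,
    IsMarkovTraj.reach_eq_one_of_support_eq hμu hμp (support_uniformizeSupport p) s T⟩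
end

section
/- Let S be a finite nonempty type, p : S → PMF S a transition function, and for each state s let μ_{p,s} denote the Markov-chain trajectory measure on ℕ → S started at s. Define the support graph on S by putting an edge from s to s' whenever p s assigns positive probability to s'. Then for every start state s and target set T ⊆ S, μ_{p,s}(Reach(T)) > 0 if and only if there exists a finite path s = s₀, s₁, …, s_j in the support graph with s_j ∈ T (i.e., T is reachable from s in the support graph). -/
open MeasureTheory
open scoped Classical

/-- A length-`n` cylinder around `w` has positive probability iff `w` starts at `s` and its first
`n` steps are edges of the support graph. -/
theorem IsMarkovTraj.cylinder_pos_iff {S : Type*} [MeasurableSpace S] {p : S → PMF S} {s : S}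
    {μ : Measure (ℕ → S)} (hμ : IsMarkovTraj p s μ) (n : ℕ) (w : ℕ → S) :
    0 < μ {ω | ∀ i : Fin (n + 1), ω i = w i} ↔
      w 0 = s ∧ ∀ i < n, 0 < p (w i) (w (i + 1)) := by
  rw [hμ.2 n fun i => w i]
  by_cases h : w 0 = s
  · simp [h, pos_iff_ne_zero, Finset.prod_eq_zero_iff, Fin.forall_iff]
  · simp [h]

/-- `ReflTransGen r a b` holds iff `a` and `b` are the endpoints of a finite `r`-path. -/
theorem reflTransGen_iff_exists_path {S : Type*} {r : S → S → Prop} {a b : S} :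
    Relation.ReflTransGen r a b ↔
      ∃ (n : ℕ) (w : ℕ → S), w 0 = a ∧ w n = b ∧ ∀ i < n, r (w i) (w (i + 1)) := by
  constructor
  · intro h
    induction h using Relation.ReflTransGen.head_induction_on with
    | refl => exact ⟨0, fun _ => b, rfl, rfl, by simp⟩
    | @head a c hac _ ih =>
      obtain ⟨n, w, rfl, hb, hw⟩ := ih
      refine ⟨n + 1, fun k => Nat.casesOn k a w, rfl, hb, ?_⟩
      rintro (_ | i) hi
      · exact hac
      · exact hw i (by omega)
  · rintro ⟨n, w, rfl, rfl, hw⟩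
    induction n with
    | zero => exact .refl
    | succ n ih => exact (ih fun i hi => hw i (by omega)).tail (hw n n.lt_succ_self)

/-- Positive-probability reachability in a finite-state Markov chain is equivalent to
reachability of the target set in the support graph (the directed graph with an edge
`s → s'` iff `p s` assigns positive probability to `s'`). -/
theorem markov_reach_pos_iff_support_graph_reach
    {S : Type*} [Fintype S] [Nonempty S] [MeasurableSpace S] [DiscreteMeasurableSpace S]
    (p : S → PMF S) (s : S) (μ : Measure (ℕ → S)) (hμ : IsMarkovTraj p s μ)
    (T : Set S) :
    0 < μ {ω | ∃ n, ω n ∈ T} ↔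
      ∃ t ∈ T, Relation.ReflTransGen (fun a b => 0 < p a b) s t := by
  constructor
  · intro h
    have hcover : {ω : ℕ → S | ∃ n, ω n ∈ T} ⊆
        ⋃ (n : ℕ) (w : Fin (n + 1) → S), {ω | ω n ∈ T ∧ ∀ i : Fin (n + 1), ω i = w i} := by
      rintro ω ⟨n, hn⟩
      simp only [Set.mem_iUnion]
      exact ⟨n, fun i => ω i, hn, fun _ => rfl⟩
    obtain ⟨n, hn⟩ := exists_measure_pos_of_not_measure_iUnion_null
      (h.trans_le (measure_mono hcover)).ne'
    obtain ⟨w, hw⟩ := exists_measure_pos_of_not_measure_iUnion_null hn.ne'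
    obtain ⟨ω, hωT, hωw⟩ := nonempty_of_measure_ne_zero hw.ne'
    have hcyl : 0 < μ {ω' | ∀ i : Fin (n + 1), ω' i = ω i} :=
      hw.trans_le (measure_mono fun ω' h' i => (h'.2 i).trans (hωw i).symm)
    obtain ⟨h0, hstep⟩ := (hμ.cylinder_pos_iff n ω).1 hcyl
    exact ⟨ω n, hωT, reflTransGen_iff_exists_path.2 ⟨n, ω, h0, rfl, hstep⟩⟩
  · rintro ⟨t, ht, hst⟩
    obtain ⟨n, w, h0, rfl, hstep⟩ := reflTransGen_iff_exists_path.1 hst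
    refine ((hμ.cylinder_pos_iff n w).2 ⟨h0, hstep⟩).trans_le (measure_mono fun ω hω => ⟨n, ?_⟩)
    have hn : ω n = w n := hω (Fin.last n)
    exact hn ▸ ht
end

section
/- Let S be a finite type and p : S → PMF S a transition function, with support graph having an edge s → s' whenever p s assigns positive probability to s'. If a set T ⊆ S is reachable from a state s in the support graph, then there is a path in the support graph from s to some state of T of length strictly less than the cardinality of S; consequently the probability, under the Markov chain with transitions p started at s, that some state of T is visited within the first (card S) steps is positive. (Bounded-length path property used to justify the bound k = |S|·|M| in the paper's SAT encoding, via Lemma 2.) -/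
open MeasureTheory
open scoped Classical

/-- A path that visits the same vertex at times `a < b` can be shortened by cutting out the
segment between them. -/
theorem exists_shorter_path_of_eq {S : Type*} {r : S → S → Prop} {w : ℕ → S} {j a b : ℕ}
    (hw : ∀ i < j, r (w i) (w (i + 1))) (hab : a < b) (hbj : b ≤ j) (heq : w a = w b) :
    ∃ k < j, ∃ v : ℕ → S, v 0 = w 0 ∧ (∀ i < k, r (v i) (v (i + 1))) ∧ v k = w j := by
  refine ⟨j - (b - a), by omega, fun i => if i ≤ a then w i else w (i + (b - a)), by simp,
    fun i hi => ?_, ?_⟩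
  · rcases lt_trichotomy i a with hia | rfl | hia
    · simpa [hia.le, Nat.succ_le_of_lt hia] using hw i (by omega)
    · have hstep := hw b (by omega)
      rw [← heq] at hstep
      simpa [show i + 1 + (b - i) = b + 1 by omega] using hstep
    · have hstep := hw (i + (b - a)) (by omega)
      simpa [show ¬ i ≤ a by omega, show ¬ i + 1 ≤ a by omega,
        show i + 1 + (b - a) = i + (b - a) + 1 by omega] using hstep
  · by_cases hja : j - (b - a) ≤ a
    · obtain rfl : b = j := by omega
      simp [show b - (b - a) = a by omega, heq]
    · simp [hja, show j - (b - a) + (b - a) = j by omega]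

/-- In a finite directed graph, a set reachable from `s` is reachable by a path of length less
than the number of vertices. -/
theorem exists_path_length_lt_card {S : Type*} [Fintype S] {r : S → S → Prop} {s : S} {T : Set S}
    (h : ∃ j, ∃ w : ℕ → S, w 0 = s ∧ (∀ i < j, r (w i) (w (i + 1))) ∧ w j ∈ T) :
    ∃ j < Fintype.card S, ∃ w : ℕ → S, w 0 = s ∧ (∀ i < j, r (w i) (w (i + 1))) ∧ w j ∈ T := by
  obtain ⟨w, hw0, hw, hwT⟩ := Nat.find_spec h
  refine ⟨Nat.find h, ?_, w, hw0, hw, hwT⟩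
  by_contra! hcard
  obtain ⟨x, y, hxy, heq⟩ := Fintype.exists_ne_map_eq_of_card_lt
    (fun i : Fin (Nat.find h + 1) => w i) (by simpa using Nat.lt_succ_of_le hcard)
  wlog hlt : x < y generalizing x y
  · exact this y x hxy.symm heq.symm (lt_of_le_of_ne (not_lt.mp hlt) hxy.symm)
  obtain ⟨k, hk, v, hv0, hv, hvk⟩ :=
    exists_shorter_path_of_eq hw hlt (Nat.le_of_lt_succ y.isLt) heq
  exact Nat.find_min h hk ⟨v, hv0.trans hw0, hv, hvk ▸ hwT⟩

/-- The trajectory measure gives positive mass to the cylinder of any path of the support graph. -/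
theorem IsMarkovTraj.cylinder_pos {S : Type*} [MeasurableSpace S] {p : S → PMF S} {s : S}
    {μ : Measure (ℕ → S)} (hμ : IsMarkovTraj p s μ) {j : ℕ} {w : ℕ → S} (hw0 : w 0 = s)
    (hw : ∀ i < j, 0 < p (w i) (w (i + 1))) :
    0 < μ {ω | ∀ i : Fin (j + 1), ω i = w i} := by
  rw [hμ.2 j (fun i => w i), if_pos (by simpa using hw0), pos_iff_ne_zero, Finset.prod_ne_zero_iff]
  intro i _
  simpa using pos_iff_ne_zero.mp (hw i i.isLt)

/-- If the target set `T` is reachable from `s` in the support graph of `p`, then it is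
reachable by a path of length strictly less than `card S`; consequently the Markov chain
with transitions `p` started at `s` visits `T` within the first `card S` steps with
positive probability. -/
theorem support_graph_reach_bounded_and_pos
    {S : Type*} [Fintype S] [MeasurableSpace S] [DiscreteMeasurableSpace S]
    (p : S → PMF S) (s : S) (T : Set S)
    (μ : Measure (ℕ → S)) (hμ : IsMarkovTraj p s μ)
    (h : ∃ j, ∃ w : ℕ → S, w 0 = s ∧ (∀ i < j, 0 < p (w i) (w (i + 1))) ∧ w j ∈ T) :
    (∃ j < Fintype.card S, ∃ w : ℕ → S,
        w 0 = s ∧ (∀ i < j, 0 < p (w i) (w (i + 1))) ∧ w j ∈ T) ∧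
      0 < μ {ω | ∃ k ≤ Fintype.card S, ω k ∈ T} := by
  have hpath := exists_path_length_lt_card (r := fun a b => 0 < p a b) h
  refine ⟨hpath, ?_⟩
  obtain ⟨j, hj, w, hw0, hw, hwT⟩ := hpath
  refine (hμ.cylinder_pos hw0 hw).trans_le (measure_mono fun ω hω => ⟨j, hj.le, ?_⟩)
  have hωj : ω j = w j := by simpa using hω (Fin.last j)
  exact hωj ▸ hwT
end
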